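/- arXiv:2601.02810 — 2 statements merged into one kernel-verified Lean document; each statement's English description precedes it below -/
import Mathlib

section
/- For every ϑ ∈ (−π/2, π/2) with ϑ ≠ 0, every ζ₀ ∈ ℝ and every fixed t ∈ ℝ, the single type-I dark soliton satisfies lim_{x→+∞} u_I(x,t) = −exp(2iϑ) and lim_{x→−∞} u_I(x,t) = −exp(2iϑ). In particular |u_I(x,t)| → 1 at both spatial infinities and u_I acquires no phase shift as x runs from −∞ to +∞. -/
/-!
Since `cos ϑ > 0`, the phase `ζ(x,t)` tends to `±∞` as `x → ±∞`, so `cosh ζ → +∞` at both ends.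
A Möbius expression `(a + A c) / (b + B c)` with `B ≠ 0` tends to `A / B` as `c → +∞`
(`tendsto_mobius_of_atTop`); here `A / B = Θ⁽¹⁾ / Θ⁽⁰⁾ = -p / conj p = -exp(2iϑ)`, the same value
at both ends because `cosh` is even.
-/

open Filter Topology

theorem tendsto_cosh_of_abs_atTop {α : Type*} {l : Filter α} {f : α → ℝ}
    (hf : Tendsto (fun x => |f x|) l atTop) :
    Tendsto (fun x => Real.cosh (f x)) l atTop := by
  refine tendsto_atTop_mono (fun x => ?_) (hf.atTop_div_const (show (0 : ℝ) < 2 by norm_num))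
  rw [← Real.cosh_abs, Real.cosh_eq]
  linarith [Real.add_one_le_exp |f x|, Real.exp_pos (-|f x|)]

theorem tendsto_mobius_of_atTop {α : Type*} {l : Filter α} {c : α → ℝ}
    (hc : Tendsto c l atTop) (a A b B : ℂ) (hB : B ≠ 0) :
    Tendsto (fun x => (a + A * (c x : ℂ)) / (b + B * (c x : ℂ))) l (𝓝 (A / B)) := by
  have hinv : Tendsto (fun x => (((c x)⁻¹ : ℝ) : ℂ)) l (𝓝 0) := by
    have h := (Complex.continuous_ofReal.tendsto 0).comp (tendsto_inv_atTop_zero.comp hc)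
    simpa [Function.comp_def] using h
  have hlim : Tendsto (fun x => (a * (((c x)⁻¹ : ℝ) : ℂ) + A) / (b * (((c x)⁻¹ : ℝ) : ℂ) + B)) l
      (𝓝 ((a * 0 + A) / (b * 0 + B))) :=
    ((hinv.const_mul a).add_const A).div ((hinv.const_mul b).add_const B) (by simpa using hB)
  simp only [mul_zero, zero_add] at hlim
  refine hlim.congr' ?_
  filter_upwards [hc.eventually_gt_atTop 0] with x hx
  have hx' : (c x : ℂ) ≠ 0 := by exact_mod_cast hx.ne'
  rw [← mul_div_mul_right _ _ hx']
  congr 1 <;> push_cast <;> field_simp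

/-- Spatial asymptotics of the single type-I dark soliton: at every fixed time `t`,
`u_I(x,t) → -exp(2iϑ)` both as `x → +∞` and as `x → -∞` (so `|u_I| → 1` and no
phase shift is acquired). -/
theorem typeI_dark_soliton_spatial_asymptotics
    (ϑ ζ₀ : ℝ) (hϑ : ϑ ∈ Set.Ioo (-(Real.pi / 2)) (Real.pi / 2)) (hϑ0 : ϑ ≠ 0)
    (p : ℂ) (hp : p = Complex.exp (ϑ * Complex.I))
    (χ Θ : ℕ → ℂ)
    (hχ : ∀ n, χ n = 1 - (4 / (p ^ 2 - (starRingEnd ℂ) p ^ 2) ^ 2)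
        * (p / (starRingEnd ℂ) p) ^ (2 * n))
    (hΘ : ∀ n, Θ n = (2 / (p + (starRingEnd ℂ) p)) * (-(p / (starRingEnd ℂ) p)) ^ n)
    (ζ : ℝ → ℝ → ℝ)
    (hζ : ∀ x t, ζ x t = 2 * Real.cos ϑ * (x + (4 - 2 * Real.cos (2 * ϑ)) * t) + ζ₀)
    (u : ℝ → ℝ → ℂ)
    (hu : ∀ x t, u x t = (χ 1 + Θ 1 * Complex.cosh ((ζ x t : ℝ) : ℂ))
        / (χ 0 + Θ 0 * Complex.cosh ((ζ x t : ℝ) : ℂ))) :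
    ∀ t : ℝ,
      Filter.Tendsto (fun x => u x t) Filter.atTop
        (nhds (-Complex.exp (2 * (ϑ : ℂ) * Complex.I)))
      ∧ Filter.Tendsto (fun x => u x t) Filter.atBot
        (nhds (-Complex.exp (2 * (ϑ : ℂ) * Complex.I))) := by
  intro t
  have hcos : 0 < Real.cos ϑ := Real.cos_pos_of_mem_Ioo hϑ
  have hconj : (starRingEnd ℂ) p = Complex.exp (-(ϑ * Complex.I)) := by
    rw [hp, ← Complex.exp_conj]
    simp
  have hsum : p + (starRingEnd ℂ) p ≠ 0 := by
    have h : p + (starRingEnd ℂ) p = ((2 * Real.cos ϑ : ℝ) : ℂ) := by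
      rw [hconj, hp]
      push_cast
      rw [Complex.two_cos, neg_mul]
    rw [h]
    exact_mod_cast (by positivity : (2 * Real.cos ϑ) ≠ 0)
  have hΘ0 : Θ 0 ≠ 0 := by
    rw [hΘ, pow_zero, mul_one]
    exact div_ne_zero two_ne_zero hsum
  have hratio : Θ 1 / Θ 0 = -Complex.exp (2 * (ϑ : ℂ) * Complex.I) := by
    have h1 : Θ 1 = Θ 0 * (-(p / (starRingEnd ℂ) p)) := by
      rw [hΘ, hΘ]
      ring
    rw [h1, mul_div_cancel_left₀ _ hΘ0, hconj, hp, ← Complex.exp_sub]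
    ring_nf
  have key : ∀ l : Filter ℝ, Tendsto (fun x => |ζ x t|) l atTop →
      Tendsto (fun x => u x t) l (𝓝 (-Complex.exp (2 * (ϑ : ℂ) * Complex.I))) := by
    intro l hl
    have h := tendsto_mobius_of_atTop (tendsto_cosh_of_abs_atTop hl) (χ 1) (Θ 1) (χ 0) (Θ 0) hΘ0
    rw [hratio] at h
    simpa only [hu, Complex.ofReal_cosh] using h
  have h2cos : 0 < 2 * Real.cos ϑ := by positivity
  constructor
  · refine key _ (tendsto_abs_atTop_atTop.comp ?_)
    simp only [hζ]
    exact tendsto_atTop_add_const_right _ _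
      ((tendsto_atTop_add_const_right _ _ tendsto_id).const_mul_atTop h2cos)
  · refine key _ (tendsto_abs_atBot_atTop.comp ?_)
    simp only [hζ]
    exact tendsto_atBot_add_const_right _ _
      ((tendsto_atBot_add_const_right _ _ tendsto_id).const_mul_atBot h2cos)
end

section
/- Let ϑ ∈ (−π/2, π/2) with ϑ ≠ 0 satisfy the double-valley condition 8 cos ϑ sin²ϑ − 4 cos²ϑ sin²ϑ − 1 < 0, and set I = √(1 − 16 cos³ϑ sin²ϑ / (1 + 4 cos ϑ sin²ϑ (cos ϑ + 1))) (the center intensity) and Ī = (2cos²ϑ − 1)² |sin ϑ| / √(16 cos⁸ϑ − 48 cos⁶ϑ + 40 cos⁴ϑ − 8 cos²ϑ + 1) (the valley intensity). Then Ī < I < 1; hence the minimum intensity of the double-valley type-I dark soliton is attained at the two side valleys, not at the center. -/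
/-!
Write `c = cos ϑ ∈ (0, 1)`, `s = sin ϑ`, and set `D = 1 + 4cs²(c + 1)`, `N = D - 16c³s²`,
`t = 2c² - 1`, and `Q` for the polynomial under the root in `Ī`, so that formally
`I² = N / D` and `Ī² = t⁴s² / Q`. Both `D` and `Q` are positive, the latter because
`Q = (4c⁴ - 6c² + 1)² + 4c²(1 - c²)`. The comparison rests on the identity
`N Q - t⁴ s² D = c² g² D`, where `g = 8cs² - 4c²s² - 1` is the double-valley expression.
Since `g ≠ 0`, this gives `Ī² < N / D`, hence `Ī < I`; and `I < 1` because `c³s² > 0`.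
-/

/-- For a double-valley type-I dark soliton the valley intensity `Ī` is strictly
smaller than the center intensity `I`, which is strictly smaller than the background
`1`: the minimum intensity is attained at the two side valleys. -/
theorem typeI_dark_soliton_valley_below_center
    (ϑ : ℝ) (hϑ : ϑ ∈ Set.Ioo (-(Real.pi / 2)) (Real.pi / 2)) (hϑ0 : ϑ ≠ 0)
    (hdv : 8 * Real.cos ϑ * Real.sin ϑ ^ 2 - 4 * Real.cos ϑ ^ 2 * Real.sin ϑ ^ 2 - 1 < 0)
    (I Ibar : ℝ)
    (hI : I = Real.sqrt (1 - 16 * Real.cos ϑ ^ 3 * Real.sin ϑ ^ 2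
        / (1 + 4 * Real.cos ϑ * Real.sin ϑ ^ 2 * (Real.cos ϑ + 1))))
    (hIbar : Ibar = (2 * Real.cos ϑ ^ 2 - 1) ^ 2 * |Real.sin ϑ|
        / Real.sqrt (16 * Real.cos ϑ ^ 8 - 48 * Real.cos ϑ ^ 6 + 40 * Real.cos ϑ ^ 4
            - 8 * Real.cos ϑ ^ 2 + 1)) :
    Ibar < I ∧ I < 1 := by
  obtain ⟨hlo, hhi⟩ := hϑ
  have hc : 0 < Real.cos ϑ := Real.cos_pos_of_mem_Ioo ⟨hlo, hhi⟩
  have hs : Real.sin ϑ ≠ 0 := fun h =>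
    hϑ0 ((Real.sin_eq_zero_iff_of_lt_of_lt (by linarith) (by linarith)).1 h)
  have hs2 : 0 < Real.sin ϑ ^ 2 := by positivity
  have hsc : Real.sin ϑ ^ 2 = 1 - Real.cos ϑ ^ 2 := Real.sin_sq ϑ
  subst hI hIbar
  generalize Real.cos ϑ = c at *
  generalize Real.sin ϑ = s at *
  have hD : 0 < 1 + 4 * c * s ^ 2 * (c + 1) := by positivity
  have hQ : 0 < 16 * c ^ 8 - 48 * c ^ 6 + 40 * c ^ 4 - 8 * c ^ 2 + 1 := by
    have h : 16 * c ^ 8 - 48 * c ^ 6 + 40 * c ^ 4 - 8 * c ^ 2 + 1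
        = (4 * c ^ 4 - 6 * c ^ 2 + 1) ^ 2 + 4 * c ^ 2 * s ^ 2 := by
      rw [hsc]; ring
    rw [h]; positivity
  constructor
  · apply Real.lt_sqrt_of_sq_lt
    rw [div_pow, Real.sq_sqrt hQ.le, mul_pow, sq_abs, one_sub_div hD.ne',
      div_lt_div_iff₀ hQ hD]
    have key : (1 + 4 * c * s ^ 2 * (c + 1) - 16 * c ^ 3 * s ^ 2)
          * (16 * c ^ 8 - 48 * c ^ 6 + 40 * c ^ 4 - 8 * c ^ 2 + 1)
        - ((2 * c ^ 2 - 1) ^ 2) ^ 2 * s ^ 2 * (1 + 4 * c * s ^ 2 * (c + 1))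
        = c ^ 2 * (8 * c * s ^ 2 - 4 * c ^ 2 * s ^ 2 - 1) ^ 2
          * (1 + 4 * c * s ^ 2 * (c + 1)) := by
      rw [hsc]; ring
    have hpos : 0 < c ^ 2 * (8 * c * s ^ 2 - 4 * c ^ 2 * s ^ 2 - 1) ^ 2
        * (1 + 4 * c * s ^ 2 * (c + 1)) :=
      mul_pos (mul_pos (by positivity) (sq_pos_of_neg hdv)) hD
    linarith
  · rw [Real.sqrt_lt' one_pos]
    have : 0 < 16 * c ^ 3 * s ^ 2 / (1 + 4 * c * s ^ 2 * (c + 1)) := by positivity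
    linarith
end
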